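/- In B3, the word α' = σ2²σ1σ2⁻¹σ1⁻³σ2⁻¹σ1²σ2⁻²σ1⁻²σ2³σ1⁻¹σ2σ1⁻¹σ2² equals (σ2σ1⁻¹σ2σ1⁻¹σ2²)³·Δ3⁻², where Δ3 = σ1σ2σ1; in particular α' is a non-trivial element of B3. -/

import Mathlib

open FreeGroup

/-- The defining relation of the braid group `B₃`: `σ₁σ₂σ₁ = σ₂σ₁σ₂`. -/
def B3rels : Set (FreeGroup (Fin 2)) :=
  {of 0 * of 1 * of 0 * (of 1 * of 0 * of 1)⁻¹}

/-- The braid group on three strands. -/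
abbrev B3 := PresentedGroup B3rels

def σ₁ : B3 := PresentedGroup.of 0
def σ₂ : B3 := PresentedGroup.of 1

/-- The half-twist `Δ₃ = σ₁σ₂σ₁`. -/
def Δ₃ : B3 := σ₁ * σ₂ * σ₁

/-- The 3-braid `α' = σ₂²σ₁σ₂⁻¹σ₁⁻³σ₂⁻¹σ₁²σ₂⁻²σ₁⁻²σ₂³σ₁⁻¹σ₂σ₁⁻¹σ₂²` obtained by
forgetting the fourth strand of Cooper–Long's kernel element. -/
def α' : B3 :=
  σ₂ ^ 2 * σ₁ * σ₂⁻¹ * σ₁ ^ (-3 : ℤ) * σ₂⁻¹ * σ₁ ^ 2 * σ₂ ^ (-2 : ℤ) *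
    σ₁ ^ (-2 : ℤ) * σ₂ ^ 3 * σ₁⁻¹ * σ₂ * σ₁⁻¹ * σ₂ ^ 2

/-- The relation between two words, expressed in the generators `x = aba`, `y = ab` of the group
`⟨x, y | x² = y³⟩`, where `a = y⁻¹x` and `b = x⁻¹y²`. It is proved by reduction to the normal form
modulo the central element `x² = y³`. -/
lemma word_eq_of_sq_eq_cube {G : Type*} [Group G] {x y : G} (h : x ^ 2 = y ^ 3) {a b : G}
    (ha : a = y⁻¹ * x) (hb : b = x⁻¹ * y ^ 2) :
    b ^ 2 * a * b⁻¹ * a ^ (-3 : ℤ) * b⁻¹ * a ^ 2 * b ^ (-2 : ℤ) * a ^ (-2 : ℤ) * b ^ 3 * a⁻¹ * b *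
      a⁻¹ * b ^ 2 = (b * a⁻¹ * b * a⁻¹ * b ^ 2) ^ 3 * (x ^ 2)⁻¹ := by
  obtain ⟨z, hz⟩ : ∃ z, z = x ^ 2 := ⟨_, rfl⟩
  have hxx : x * x = z := by rw [hz, sq]
  have hyy : y * (y * y) = z := by rw [hz, h, pow_succ', sq]
  have hxx' (g : G) : x * (x * g) = z * g := by rw [← hxx, mul_assoc]
  have hyy' (g : G) : y * (y * (y * g)) = z * g := by rw [← hyy]; simp only [mul_assoc]
  have hxz : Commute x z := hz ▸ Commute.self_pow x 2
  have hyz : Commute y z := hz ▸ h ▸ Commute.self_pow y 3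
  have hx : x⁻¹ = z⁻¹ * x := by rw [← hxx]; group
  have hy : y⁻¹ = z⁻¹ * (y * y) := by rw [← hyy]; group
  have ha' : a = z⁻¹ * (y * (y * x)) := by rw [ha, hy]; simp only [mul_assoc]
  have hb' : b = z⁻¹ * (x * (y * y)) := by rw [hb, hx, sq]; simp only [mul_assoc]
  have hai : a⁻¹ = z⁻¹ * (x * y) := by rw [ha, mul_inv_rev, inv_inv, hx, mul_assoc]
  have hbi : b⁻¹ = z⁻¹ * (y * x) := by
    rw [hb, mul_inv_rev, inv_inv, ← mul_assoc, mul_left_inj, inv_eq_iff_mul_eq_one, sq, mul_assoc,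
      ← mul_assoc y z⁻¹, hyz.inv_right.eq, mul_assoc, hyz.inv_right.left_comm, hyy, inv_mul_cancel]
  have ha3 : a ^ (-3 : ℤ) = a⁻¹ * (a⁻¹ * a⁻¹) := by group
  have ha2 : a ^ (-2 : ℤ) = a⁻¹ * a⁻¹ := by group
  have hb2 : b ^ (-2 : ℤ) = b⁻¹ * b⁻¹ := by group
  rw [← hz, ha3, ha2, hb2, hai, hbi, ha', hb']
  simp only [pow_succ, pow_zero, one_mul, mul_assoc, hxx', hyy', hyz.inv_right.eq,
    hxz.inv_right.left_comm, hyz.inv_right.left_comm, inv_mul_cancel_left]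

lemma σ₁_mul_σ₂_mul_σ₁ : σ₁ * σ₂ * σ₁ = σ₂ * σ₁ * σ₂ :=
  mul_inv_eq_one.mp (PresentedGroup.one_of_mem (rels := B3rels) rfl)

/-- The matrices in `SL(2, ℤ)` to which `σ₁` and `σ₂` are sent. -/
def slGenerator : Fin 2 → Matrix.SpecialLinearGroup (Fin 2) ℤ :=
  ![⟨!![1, 1; 0, 1], by decide⟩, ⟨!![1, 0; -1, 1], by decide⟩]

lemma lift_slGenerator_eq_one : ∀ r ∈ B3rels, FreeGroup.lift slGenerator r = 1 := by
  rintro _ rfl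
  simp only [_root_.map_mul, _root_.map_inv, FreeGroup.lift_apply_of]
  decide

/-- The homomorphism `B₃ → SL(2, ℤ)` (the reduced Burau representation at `t = -1`). -/
def B3.toSL : B3 →* Matrix.SpecialLinearGroup (Fin 2) ℤ :=
  PresentedGroup.toGroup lift_slGenerator_eq_one

lemma α'_ne_one : α' ≠ 1 := by
  intro h
  have h₁ : B3.toSL σ₁ = slGenerator 0 := PresentedGroup.toGroup.of lift_slGenerator_eq_one
  have h₂ : B3.toSL σ₂ = slGenerator 1 := PresentedGroup.toGroup.of lift_slGenerator_eq_one
  have key := congrArg B3.toSL h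
  simp only [α', _root_.map_mul, _root_.map_pow, _root_.map_zpow, _root_.map_inv,
    _root_.map_one, h₁, h₂] at key
  revert key
  decide

/-- In `B₃`, `α' = (σ₂σ₁⁻¹σ₂σ₁⁻¹σ₂²)³ Δ₃⁻²`; in particular `α'` is non-trivial. -/
theorem alpha'_eq_and_nontrivial :
    α' = (σ₂ * σ₁⁻¹ * σ₂ * σ₁⁻¹ * σ₂ ^ 2) ^ 3 * (Δ₃ ^ 2)⁻¹ ∧ α' ≠ 1 := by
  refine ⟨?_, α'_ne_one⟩
  refine word_eq_of_sq_eq_cube (x := Δ₃) (y := σ₁ * σ₂) ?_ ?_ ?_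
  · calc Δ₃ ^ 2 = σ₁ * σ₂ * σ₁ * (σ₁ * σ₂ * σ₁) := sq _
      _ = σ₁ * σ₂ * σ₁ * (σ₂ * σ₁ * σ₂) := by rw [σ₁_mul_σ₂_mul_σ₁]
      _ = (σ₁ * σ₂) ^ 3 := by simp only [pow_succ, pow_zero, one_mul, mul_assoc]
  · rw [eq_inv_mul_iff_mul_eq, Δ₃, σ₁_mul_σ₂_mul_σ₁]
  · rw [eq_inv_mul_iff_mul_eq, Δ₃, sq, ← mul_assoc]
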